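/- arXiv:2112.15046 — 2 statements merged into one kernel-verified Lean document; each statement's English description precedes it below -/
import Mathlib

section
/- Being a qi-characteristic collection is invariant under quasi-isometry of pairs: if X and Y are metric spaces, 𝒜 and ℬ are collections of subspaces of X and Y respectively, and q : (X,𝒜) → (Y,ℬ) is a quasi-isometry of pairs, then 𝒜 is a qi-characteristic collection of subspaces of X if and only if ℬ is a qi-characteristic collection of subspaces of Y. -/
open Pointwise
open scoped ENNReal

/-- Hausdorff distance (valued in `ℝ≥0∞`) between two subsets, with respect to an
arbitrary distance function `d`. -/
noncomputable def hdist {Y : Type*} (d : Y → Y → ℝ) (A B : Set Y) : ℝ≥0∞ :=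
  max (⨆ a ∈ A, ⨅ b ∈ B, ENNReal.ofReal (d a b))
      (⨆ b ∈ B, ⨅ a ∈ A, ENNReal.ofReal (d a b))

/-- `q : X → Y` is an `(L,C)`-quasi-isometry with respect to the distance functions
`dX`, `dY`. -/
def IsQI {X Y : Type*} (dX : X → X → ℝ) (dY : Y → Y → ℝ) (L C : ℝ) (q : X → Y) : Prop :=
  1 ≤ L ∧ 0 ≤ C ∧
    (∀ x x' : X, L⁻¹ * dX x x' - C ≤ dY (q x) (q x') ∧ dY (q x) (q x') ≤ L * dX x x' + C) ∧
    ∀ y : Y, ∃ x : X, dY y (q x) ≤ C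

/-- `q : (X, 𝒜) → (Y, ℬ)` is an `(L,C,M)`-quasi-isometry of pairs. -/
def IsQIPair {X Y : Type*} (dX : X → X → ℝ) (dY : Y → Y → ℝ) (L C M : ℝ)
    (q : X → Y) (𝒜 : Set (Set X)) (ℬ : Set (Set Y)) : Prop :=
  IsQI dX dY L C q ∧
    (∀ A ∈ 𝒜, ∃ B ∈ ℬ, hdist dY (q '' A) B < ENNReal.ofReal M) ∧
    (∀ B ∈ ℬ, ∃ A ∈ 𝒜, hdist dY (q '' A) B < ENNReal.ofReal M)

/-- A subset `B` is bounded with respect to the distance function `d`. -/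
def BoundedWrt {X : Type*} (d : X → X → ℝ) (B : Set X) : Prop :=
  ∃ r : ℝ, ∀ x ∈ B, ∀ y ∈ B, d x y ≤ r

/-- A collection `𝒜` of subspaces of `X` is quasi-isometrically characteristic. -/
def IsQIChar {X : Type*} (d : X → X → ℝ) (𝒜 : Set (Set X)) : Prop :=
  (∀ L C : ℝ, 1 ≤ L → 0 ≤ C → ∃ M > (0 : ℝ),
      ∀ q : X → X, IsQI d d L C q → IsQIPair d d L C M q 𝒜 𝒜) ∧
    (∀ B : Set X, BoundedWrt d B →
      ∃ F : Set (Set X), F.Finite ∧ F ⊆ 𝒜 ∧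
        ∀ A ∈ 𝒜, (A ∩ B).Nonempty → ∃ A' ∈ F, hdist d A A' < ⊤) ∧
    (∀ A ∈ 𝒜, ∃ r : ℝ≥0∞, r < ⊤ ∧
      ∀ A₁ ∈ 𝒜, ∀ A₂ ∈ 𝒜, hdist d A A₁ < ⊤ → hdist d A A₂ < ⊤ → hdist d A₁ A₂ ≤ r)

/-- The word metric on a group `G` with respect to a generating set `S`:
`wordDist S g h` is the least `n` such that `g⁻¹ * h` is a product of `n` elements
of `S ∪ S⁻¹`. -/
noncomputable def wordDist {G : Type*} [Group G] (S : Set G) (g h : G) : ℝ :=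
  (sInf {n : ℕ | g⁻¹ * h ∈ (S ∪ S⁻¹) ^ n} : ℕ)

/-- The collection of all left cosets `gP` with `g ∈ G` and `P ∈ PP`. -/
def cosets {G : Type*} [Group G] (PP : Set (Subgroup G)) : Set (Set G) :=
  {A : Set G | ∃ g : G, ∃ P ∈ PP, A = g • (P : Set G)}

def HD {X : Type*} [MetricSpace X] (r : ℝ) (A B : Set X) : Prop :=
  (∀ a ∈ A, ∃ b ∈ B, dist a b ≤ r) ∧ (∀ b ∈ B, ∃ a ∈ A, dist a b ≤ r)

section HDlemmas
variable {X Y Z : Type*} [MetricSpace X] [MetricSpace Y] [MetricSpace Z]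

theorem HD.of_lt {A B : Set X} {M : ℝ}
    (h : hdist (fun x x' : X => dist x x') A B < ENNReal.ofReal M) : HD M A B := by
  unfold hdist at h
  rw [max_lt_iff] at h
  constructor
  · intro a ha
    have h1 := lt_of_le_of_lt (le_iSup₂ (f := fun a (_ : a ∈ A) => ⨅ b ∈ B, ENNReal.ofReal (dist a b)) a ha) h.1
    simp only [iInf_lt_iff] at h1
    obtain ⟨b, hb, h2⟩ := h1
    exact ⟨b, hb, (ENNReal.ofReal_lt_ofReal_iff'.1 h2).1.le⟩
  · intro b hb
    have h1 := lt_of_le_of_lt (le_iSup₂ (f := fun b (_ : b ∈ B) => ⨅ a ∈ A, ENNReal.ofReal (dist a b)) b hb) h.2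
    simp only [iInf_lt_iff] at h1
    obtain ⟨a, ha, h2⟩ := h1
    exact ⟨a, ha, (ENNReal.ofReal_lt_ofReal_iff'.1 h2).1.le⟩

theorem HD.le {A B : Set X} {r : ℝ} (h : HD r A B) :
    hdist (fun x x' : X => dist x x') A B ≤ ENNReal.ofReal r := by
  unfold hdist
  refine max_le (iSup₂_le fun a ha => ?_) (iSup₂_le fun b hb => ?_)
  · obtain ⟨b, hb, h1⟩ := h.1 a ha
    exact iInf₂_le_of_le b hb (ENNReal.ofReal_le_ofReal h1)
  · obtain ⟨a, ha, h1⟩ := h.2 b hb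
    exact iInf₂_le_of_le a ha (ENNReal.ofReal_le_ofReal h1)

theorem HD.lt_top {A B : Set X} {r : ℝ} (h : HD r A B) :
    hdist (fun x x' : X => dist x x') A B < ⊤ := h.le.trans_lt ENNReal.ofReal_lt_top

theorem HD.of_le {A B : Set X} {r : ℝ≥0∞} (hr : r < ⊤)
    (h : hdist (fun x x' : X => dist x x') A B ≤ r) : HD (r.toReal + 1) A B := by
  apply HD.of_lt
  refine h.trans_lt ?_
  rw [ENNReal.lt_ofReal_iff_toReal_lt hr.ne]
  linarith

theorem HD.symm {A B : Set X} {r : ℝ} (h : HD r A B) : HD r B A := by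
  refine ⟨fun b hb => ?_, fun a ha => ?_⟩
  · obtain ⟨a, ha, h1⟩ := h.2 b hb
    exact ⟨a, ha, by rwa [dist_comm]⟩
  · obtain ⟨b, hb, h1⟩ := h.1 a ha
    exact ⟨b, hb, by rwa [dist_comm]⟩

theorem HD.trans {A B D : Set X} {r s : ℝ} (h : HD r A B) (h' : HD s B D) :
    HD (r + s) A D := by
  refine ⟨fun a ha => ?_, fun d hd => ?_⟩
  · obtain ⟨b, hb, h1⟩ := h.1 a ha
    obtain ⟨d, hd, h2⟩ := h'.1 b hb
    exact ⟨d, hd, (dist_triangle a b d).trans (add_le_add h1 h2)⟩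
  · obtain ⟨b, hb, h1⟩ := h'.2 d hd
    obtain ⟨a, ha, h2⟩ := h.2 b hb
    exact ⟨a, ha, (dist_triangle a b d).trans (add_le_add h2 h1)⟩

theorem HD.mono {A B : Set X} {r s : ℝ} (h : HD r A B) (hrs : r ≤ s) : HD s A B := by
  refine ⟨fun b hb => ?_, fun a ha => ?_⟩
  · obtain ⟨a, ha, h1⟩ := h.1 b hb
    exact ⟨a, ha, h1.trans hrs⟩
  · obtain ⟨b, hb, h1⟩ := h.2 a ha
    exact ⟨b, hb, h1.trans hrs⟩

theorem HD.lt {A B : Set X} {r : ℝ} (h : HD r A B) :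
    hdist (fun x x' : X => dist x x') A B < ENNReal.ofReal (|r| + 1) :=
  h.le.trans_lt (by
    rw [ENNReal.ofReal_lt_ofReal_iff (by positivity)]
    linarith [le_abs_self r])

abbrev QI {X Y : Type*} [MetricSpace X] [MetricSpace Y] (L C : ℝ) (q : X → Y) : Prop :=
  IsQI (fun x x' : X => dist x x') (fun y y' : Y => dist y y') L C q

theorem QI.lower {L C : ℝ} {q : X → Y} (h : QI L C q) (x x' : X) :
    dist x x' ≤ L * (dist (q x) (q x') + C) := by
  have h1 := (h.2.2.1 x x').1
  have hL : 0 < L := by linarith [h.1]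
  have : L⁻¹ * dist x x' ≤ dist (q x) (q x') + C := by simpa using h1
  rwa [inv_mul_le_iff₀ hL] at this

theorem QI.upper {L C : ℝ} {q : X → Y} (h : QI L C q) (x x' : X) :
    dist (q x) (q x') ≤ L * dist x x' + C := (h.2.2.1 x x').2

theorem QI.mk {L C : ℝ} {q : X → Y} (hL : 1 ≤ L) (hC : 0 ≤ C)
    (h1 : ∀ x x', dist x x' ≤ L * (dist (q x) (q x') + C))
    (h2 : ∀ x x', dist (q x) (q x') ≤ L * dist x x' + C)
    (h3 : ∀ y, ∃ x, dist y (q x) ≤ C) : QI L C q := by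
  refine ⟨hL, hC, fun x x' => ⟨?_, h2 x x'⟩, h3⟩
  have hL : 0 < L := by linarith
  have := h1 x x'
  rw [← inv_mul_le_iff₀ hL] at this
  simpa using this

theorem QI.comp {L C L' C' : ℝ} {f : X → Y} {g : Y → Z} (hf : QI L C f) (hg : QI L' C' g) :
    QI (L * L') (L' * C + 2 * C') (fun x => g (f x)) := by
  have a1 := hf.1
  have a2 := hg.1
  have a3 := hf.2.1
  have a4 := hg.2.1
  have a5 : 0 ≤ L' * C := by positivity
  refine QI.mk (by nlinarith) (by positivity) (fun x x' => ?_) (fun x x' => ?_) (fun z => ?_)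
  · have h1 := hf.lower x x'
    have h2 := hg.lower (f x) (f x')
    calc dist x x' ≤ L * (dist (f x) (f x') + C) := h1
      _ ≤ L * (L' * (dist (g (f x)) (g (f x')) + C') + L' * (L' * C + C')) := by
        gcongr
        nlinarith
      _ = _ := by ring
  · have h1 := hf.upper x x'
    have h2 := hg.upper (f x) (f x')
    calc dist (g (f x)) (g (f x')) ≤ L' * dist (f x) (f x') + C' := h2
      _ ≤ L' * (L * dist x x' + C) + C' := by gcongr
      _ ≤ _ := by linarith
  · obtain ⟨y, hy⟩ := hg.2.2.2 z
    obtain ⟨x, hx⟩ := hf.2.2.2 y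
    refine ⟨x, ?_⟩
    have h2 := hg.upper y (f x)
    have h3 : L' * dist y (f x) ≤ L' * C := by gcongr
    have := dist_triangle z (g y) (g (f x))
    simp only at hy
    linarith

theorem QI.inverse {L C : ℝ} {q : X → Y} (h : QI L C q) :
    ∃ g : Y → X, QI L (3 * L * C) g ∧ (∀ y, dist y (q (g y)) ≤ C) ∧
      (∀ x, dist x (g (q x)) ≤ 2 * L * C) := by
  have a1 := h.1
  have a2 := h.2.1
  have a3 : C ≤ L * C := by nlinarith
  choose g hg using h.2.2.2
  simp only at hg
  have hgi : ∀ x, dist x (g (q x)) ≤ 2 * L * C := fun x => by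
    have h1 := h.lower x (g (q x))
    have h2 := hg (q x)
    calc _ ≤ _ := h1
      _ ≤ L * (C + C) := by gcongr
      _ = _ := by ring
  refine ⟨g, QI.mk a1 (by positivity) (fun y y' => ?_) (fun y y' => ?_) (fun x => ⟨q x, ?_⟩), hg, hgi⟩
  · have h1 := h.upper (g y) (g y')
    have h2 := dist_triangle4 y (q (g y)) (q (g y')) y'
    have h3 := hg y
    have h4 := hg y'
    rw [dist_comm] at h4
    have : 3 * (L * C) ≤ L * (3 * L * C) := by
      nlinarith [mul_nonneg (by linarith : 0 ≤ L) a2]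
    nlinarith
  · have h1 := h.lower (g y) (g y')
    have h2 := dist_triangle4 (q (g y)) y y' (q (g y'))
    have h3 := hg y
    have h4 := hg y'
    rw [dist_comm] at h3
    calc _ ≤ _ := h1
      _ ≤ L * ((C + dist y y' + C) + C) := by gcongr; linarith
      _ = _ := by ring
  · have := hgi x
    nlinarith

theorem HD.map {L C r : ℝ} {q : X → Y} (h : QI L C q) {A B : Set X} (hd : HD r A B) :
    HD (L * r + C) (q '' A) (q '' B) := by
  have a1 := h.1
  constructor
  · rintro _ ⟨a, ha, rfl⟩
    obtain ⟨b, hb, h1⟩ := hd.1 a ha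
    refine ⟨q b, ⟨b, hb, rfl⟩, (h.upper a b).trans ?_⟩
    gcongr
  · rintro _ ⟨b, hb, rfl⟩
    obtain ⟨a, ha, h1⟩ := hd.2 b hb
    refine ⟨q a, ⟨a, ha, rfl⟩, (h.upper a b).trans ?_⟩
    gcongr

theorem HD.comap {L C r : ℝ} {q : X → Y} (h : QI L C q) {A B : Set X}
    (hd : HD r (q '' A) (q '' B)) : HD (L * (r + C)) A B := by
  have a1 := h.1
  constructor
  · intro a ha
    obtain ⟨_, ⟨b, hb, rfl⟩, h1⟩ := hd.1 _ ⟨a, ha, rfl⟩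
    refine ⟨b, hb, (h.lower a b).trans ?_⟩
    gcongr
  · intro b hb
    obtain ⟨_, ⟨a, ha, rfl⟩, h1⟩ := hd.2 _ ⟨b, hb, rfl⟩
    refine ⟨a, ha, (h.lower a b).trans ?_⟩
    gcongr

theorem HD.close {c : ℝ} {f g : X → Y} (h : ∀ x, dist (f x) (g x) ≤ c) (A : Set X) :
    HD c (f '' A) (g '' A) := by
  constructor
  · rintro _ ⟨a, ha, rfl⟩
    exact ⟨g a, ⟨a, ha, rfl⟩, h a⟩
  · rintro _ ⟨a, ha, rfl⟩
    exact ⟨f a, ⟨a, ha, rfl⟩, h a⟩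

theorem pair_inverse {A : Set (Set X)} {B : Set (Set Y)} {q : X → Y} {L C M : ℝ}
    (hq : IsQIPair (fun x x' : X => dist x x') (fun y y' : Y => dist y y') L C M q A B) :
    ∃ (g : Y → X) (L' C' M' : ℝ),
      IsQIPair (fun y y' : Y => dist y y') (fun x x' : X => dist x x') L' C' M' g B A := by
  obtain ⟨h, hA, hB⟩ := hq
  obtain ⟨g, hg, -, hgq⟩ := QI.inverse h
  have key : ∀ A0 B0, hdist (fun y y' : Y => dist y y') (q '' A0) B0 < ENNReal.ofReal M →
      HD (2 * L * C + (L * M + 3 * L * C)) A0 (g '' B0) := fun A0 B0 h0 => by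
    have h1 := HD.close (f := fun x => x) (g := fun x => g (q x)) hgq A0
    have h2 := (HD.of_lt h0).map hg
    rw [Set.image_image] at h2
    rw [Set.image_id'] at h1
    exact h1.trans h2
  refine ⟨g, L, 3 * L * C, |2 * L * C + (L * M + 3 * L * C)| + 1, hg, fun B0 hB0 => ?_, fun A0 hA0 => ?_⟩
  · obtain ⟨A0, hA0, h0⟩ := hB B0 hB0
    exact ⟨A0, hA0, (key _ _ h0).symm.lt⟩
  · obtain ⟨B0, hB0, h0⟩ := hA A0 hA0
    exact ⟨B0, hB0, (key _ _ h0).symm.lt⟩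

theorem forward {A : Set (Set X)} {B : Set (Set Y)} {q : X → Y} {L C M : ℝ}
    (hq : IsQIPair (fun x x' : X => dist x x') (fun y y' : Y => dist y y') L C M q A B)
    (hA : IsQIChar (fun x x' : X => dist x x') A) :
    IsQIChar (fun y y' : Y => dist y y') B := by
  obtain ⟨h, hAB, hBA⟩ := hq
  have h : QI L C q := h
  obtain ⟨c1, c2, c3⟩ := hA
  refine ⟨fun L' C' hL' hC' => ?_, fun D hD => ?_, fun B0 hB0 => ?_⟩
  · obtain ⟨g, hg, hqg, -⟩ := QI.inverse h
    by_cases hne : ∃ p : Y → Y, QI L' C' p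
    swap
    · exact ⟨1, one_pos, fun p hp => (hne ⟨p, hp⟩).elim⟩
    obtain ⟨p0, hp0⟩ := hne
    have h0 := (h.comp hp0).comp hg
    obtain ⟨M', -, hM'⟩ := c1 _ _ h0.1 h0.2.1
    have key : ∀ (p : Y → Y), QI L' C' p → ∀ A0 A1 B0 B1, HD M (q '' A0) B0 →
        HD M (q '' A1) B1 → HD M' ((fun x => g (p (q x))) '' A0) A1 →
        HD ((L' * M + C') + (C + ((L * M' + C) + M))) (p '' B0) B1 := by
      intro p hp A0 A1 B0 B1 h1 h2 h3
      have e1 := (h1.symm).map hp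
      rw [Set.image_image] at e1
      have e2 := HD.close (f := fun x => p (q x)) (g := fun x => q (g (p (q x))))
        (fun x => hqg _) A0
      have e3 := h3.map h
      rw [Set.image_image] at e3
      exact e1.trans (e2.trans (e3.trans h2))
    refine ⟨|(L' * M + C') + (C + ((L * M' + C) + M))| + 1, ?_, fun (p : Y → Y) (hp : QI L' C' p) =>
      ⟨hp, fun B0 hB0 => ?_, fun B1 hB1 => ?_⟩⟩
    rotate_left
    · obtain ⟨A0, hA0, h1⟩ := hBA B0 hB0
      obtain ⟨A1, hA1, h3⟩ := (hM' _ ((h.comp hp).comp hg)).2.1 A0 hA0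
      obtain ⟨B1, hB1, h2⟩ := hAB A1 hA1
      exact ⟨B1, hB1, (key p hp A0 A1 B0 B1 (.of_lt h1) (.of_lt h2) (.of_lt h3)).lt⟩
    · obtain ⟨A1, hA1, h2⟩ := hBA B1 hB1
      obtain ⟨A0, hA0, h3⟩ := (hM' _ ((h.comp hp).comp hg)).2.2 A1 hA1
      obtain ⟨B0, hB0, h1⟩ := hAB A0 hA0
      exact ⟨B0, hB0, (key p hp A0 A1 B0 B1 (.of_lt h1) (.of_lt h2) (.of_lt h3)).lt⟩
    · positivity
  · obtain ⟨r, hr⟩ := hD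
    obtain ⟨F, hF, hFA, hF2⟩ := c2 {x | ∃ y ∈ D, dist (q x) y ≤ M}
      ⟨L * ((M + r + M) + C), by
        rintro x ⟨y, hy, h1⟩ x' ⟨y', hy', h2⟩
        have a1 := h.1
        refine (h.lower x x').trans ?_
        have h3 := dist_triangle4 (q x) y y' (q x')
        rw [dist_comm] at h2
        have := hr y hy y' hy'
        simp only at this
        gcongr
        linarith⟩
    choose! φ hφ hφ2 using hAB
    refine ⟨φ '' F, hF.image _, ?_, fun B0 hB0 => ?_⟩
    · rintro _ ⟨A', hA', rfl⟩
      exact hφ _ (hFA hA')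
    · rintro ⟨y, hy, hyD⟩
      obtain ⟨A0, hA0, h1⟩ := hBA B0 hB0
      have h1 := HD.of_lt h1
      obtain ⟨_, ⟨x, hx, rfl⟩, h2⟩ := h1.2 y hy
      obtain ⟨A', hA', h3⟩ := hF2 A0 hA0 ⟨x, hx, y, hyD, h2⟩
      exact ⟨φ A', ⟨A', hA', rfl⟩, (h1.symm.trans (((HD.of_le h3 le_rfl).map h).trans
        (HD.of_lt (hφ2 A' (hFA hA'))))).lt_top⟩
  · obtain ⟨A0, hA0, h0⟩ := hBA B0 hB0
    have h0 := HD.of_lt h0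
    obtain ⟨r, hr, hr2⟩ := c3 A0 hA0
    refine ⟨ENNReal.ofReal (M + ((L * (r.toReal + 1) + C) + M)), ENNReal.ofReal_lt_top,
      fun B1 hB1 B2 hB2 h1 h2 => ?_⟩
    obtain ⟨A1, hA1, k1⟩ := hBA B1 hB1
    obtain ⟨A2, hA2, k2⟩ := hBA B2 hB2
    have k1 := HD.of_lt k1
    have k2 := HD.of_lt k2
    have l1 := ((h0.trans (HD.of_le h1 le_rfl)).trans k1.symm).comap h
    have l2 := ((h0.trans (HD.of_le h2 le_rfl)).trans k2.symm).comap h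
    have := HD.of_le hr (hr2 A1 hA1 A2 hA2 l1.lt_top l2.lt_top)
    exact (k1.symm.trans ((this.map h).trans k2)).le

end HDlemmas

theorem statement3 {X Y : Type*} [MetricSpace X] [MetricSpace Y]
    (A : Set (Set X)) (B : Set (Set Y)) (q : X → Y) (L C M : ℝ)
    (hq : IsQIPair (fun x x' : X => dist x x') (fun y y' : Y => dist y y') L C M q A B) :
    IsQIChar (fun x x' : X => dist x x') A ↔
      IsQIChar (fun y y' : Y => dist y y') B := by
  refine ⟨forward hq, ?_⟩
  obtain ⟨g, L', C', M', hg⟩ := pair_inverse hq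
  exact forward hg
end

section
/- Let H = F(a,b) be the free group on two generators with generating set T = {b} ∪ {aᵏ : k ∈ ℤ, k ≠ 0}, and let φ : H → H be the automorphism determined by φ(a) = b and φ(b) = a. Then φ is not a quasi-isometry of (H, dist_{(H,T)}): there exist no constants L ≥ 1 and C ≥ 0 such that dist_{(H,T)}(φ(h),φ(h′)) ≤ L · dist_{(H,T)}(h,h′) + C for all h, h′ ∈ H. Consequently, the conjugation action h ↦ t h t⁻¹ of the element t of G = ⟨a,b,t ∣ t a t⁻¹ = b, t² = e⟩ on H is not an action by quasi-isometries with respect to dist_{(H,T)}. -/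
open Pointwise

/-- The generators `a`, `b`, `t` of the group `G = ⟨a, b, t ∣ t a t⁻¹ = b, t² = e⟩`. -/
inductive GGen : Type
  | a : GGen
  | b : GGen
  | t : GGen

/-- The relators `t a t⁻¹ b⁻¹` and `t²` of `G = ⟨a, b, t ∣ t a t⁻¹ = b, t² = e⟩`. -/
def gRels : Set (FreeGroup GGen) :=
  {FreeGroup.of GGen.t * FreeGroup.of GGen.a * (FreeGroup.of GGen.t)⁻¹ *
      (FreeGroup.of GGen.b)⁻¹,
    FreeGroup.of GGen.t * FreeGroup.of GGen.t}

/-- The group `G = ⟨a, b, t ∣ t a t⁻¹ = b, t² = e⟩`. -/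
abbrev Gp : Type := PresentedGroup gRels

/-- The generating set `S` of `G` consisting of the images of the elements of
`T = {b} ∪ {aᵏ : k ≠ 0}` together with `t`. -/
def Sset : Set Gp :=
  {PresentedGroup.of GGen.b, PresentedGroup.of GGen.t} ∪
    {x | ∃ k : ℤ, k ≠ 0 ∧ x = PresentedGroup.of (rels := gRels) GGen.a ^ k}

/-- The generators `a`, `b` of the free group `F(a,b)`. -/
inductive Gen : Type
  | a : Gen
  | b : Gen

/-- The infinite generating set `T = {b} ∪ {aᵏ : k ∈ ℤ, k ≠ 0}` of the free group
`F(a,b)`. -/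
def Tset : Set (FreeGroup Gen) :=
  {FreeGroup.of Gen.b} ∪ {x | ∃ k : ℤ, k ≠ 0 ∧ x = FreeGroup.of Gen.a ^ k}

/-- The automorphism of `F(a,b)` determined by `a ↦ b`, `b ↦ a`. -/
def psi : FreeGroup Gen →* FreeGroup Gen :=
  FreeGroup.map fun g =>
    match g with
    | Gen.a => Gen.b
    | Gen.b => Gen.a

/-- The canonical homomorphism `ι : H = F(a,b) → G = ⟨a, b, t ∣ t a t⁻¹ = b, t² = e⟩`
sending `a ↦ a` and `b ↦ b`. -/
noncomputable def iota : FreeGroup Gen →* Gp :=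
  FreeGroup.lift fun g =>
    match g with
    | Gen.a => PresentedGroup.of GGen.a
    | Gen.b => PresentedGroup.of GGen.b

/-- Exponent sum of `b`. -/
def bExp : FreeGroup Gen →* Multiplicative ℤ :=
  FreeGroup.lift fun g =>
    match g with
    | Gen.a => 1
    | Gen.b => Multiplicative.ofAdd 1

theorem bExp_gen (x : FreeGroup Gen) (hx : x ∈ Tset ∪ Tset⁻¹) :
    |Multiplicative.toAdd (bExp x)| ≤ 1 := by
  have key : ∀ y ∈ Tset, |Multiplicative.toAdd (bExp y)| ≤ 1 := by
    rintro y (hy | ⟨k, _, hy⟩)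
    · rw [Set.mem_singleton_iff] at hy
      subst hy
      simp [bExp]
    · subst hy
      simp [bExp]
  rcases hx with hx | hx
  · exact key x hx
  · have h := key _ (Set.mem_inv.1 hx)
    simpa using h

theorem bExp_pow (n : ℕ) : ∀ x : FreeGroup Gen, x ∈ (Tset ∪ Tset⁻¹) ^ n →
    |Multiplicative.toAdd (bExp x)| ≤ n := by
  induction n with
  | zero =>
    intro x hx
    rw [pow_zero, Set.mem_one] at hx
    subst hx
    simp
  | succ n ih =>
    intro x hx
    rw [pow_succ] at hx
    obtain ⟨y, hy, z, hz, rfl⟩ := Set.mem_mul.1 hx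
    have h1 := ih y hy
    have h2 := bExp_gen z hz
    rw [map_mul, toAdd_mul]
    push_cast
    exact (abs_add_le _ _).trans (add_le_add h1 h2)

theorem dist_a (k : ℕ) : wordDist Tset 1 (FreeGroup.of Gen.a ^ (k + 1)) ≤ 1 := by
  unfold wordDist
  have : sInf {n : ℕ | (1 : FreeGroup Gen)⁻¹ * FreeGroup.of Gen.a ^ (k + 1) ∈
      (Tset ∪ Tset⁻¹) ^ n} ≤ 1 := by
    apply Nat.sInf_le
    rw [Set.mem_setOf_eq, pow_one, inv_one, one_mul]
    left
    right
    exact ⟨(k : ℤ) + 1, by positivity, by exact_mod_cast rfl⟩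
  exact_mod_cast this

theorem dist_b (k : ℕ) : (k : ℝ) ≤ wordDist Tset 1 (FreeGroup.of Gen.b ^ k) := by
  unfold wordDist
  have hne : {n : ℕ | (1 : FreeGroup Gen)⁻¹ * FreeGroup.of Gen.b ^ k ∈
      (Tset ∪ Tset⁻¹) ^ n}.Nonempty := by
    refine ⟨k, ?_⟩
    rw [Set.mem_setOf_eq, inv_one, one_mul]
    exact Set.pow_mem_pow (Or.inl (Or.inl rfl))
  have h := bExp_pow _ _ (Nat.sInf_mem hne)
  have e : Multiplicative.toAdd (bExp ((1 : FreeGroup Gen)⁻¹ * FreeGroup.of Gen.b ^ k)) = k := by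
    simp [bExp]
  rw [e, abs_of_nonneg (by positivity)] at h
  exact_mod_cast h

theorem rel_a : PresentedGroup.of (rels := gRels) GGen.t * PresentedGroup.of GGen.a *
    (PresentedGroup.of GGen.t)⁻¹ = PresentedGroup.of GGen.b := by
  have h := PresentedGroup.one_of_mem (rels := gRels) (Set.mem_insert _ _)
  simp only [map_mul, map_inv] at h
  exact mul_inv_eq_one.1 h

theorem rel_t : PresentedGroup.of (rels := gRels) GGen.t * PresentedGroup.of GGen.t = 1 := by
  have h := PresentedGroup.one_of_mem (rels := gRels) (Set.mem_insert_of_mem _ rfl)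
  simp only [map_mul] at h
  exact h

/-- The automorphism `ψ` of `H = F(a,b)` swapping `a` and `b` is not
a quasi-isometry of `(H, dist_T)`: there are no `L ≥ 1`, `C ≥ 0` with
`dist_T(ψ h, ψ h') ≤ L · dist_T(h,h') + C` for all `h, h'`.  Consequently, since `ψ`
realises the conjugation action of `t ∈ G = ⟨a, b, t ∣ t a t⁻¹ = b, t² = e⟩` on `H`
(i.e. `ι(ψ h) = t · ι(h) · t⁻¹` for all `h`), this conjugation action is not an action
by quasi-isometries with respect to `dist_T`. -/
theorem statement10 :
    (¬ ∃ L C : ℝ, 1 ≤ L ∧ 0 ≤ C ∧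
        ∀ h h' : FreeGroup Gen,
          wordDist Tset (psi h) (psi h') ≤ L * wordDist Tset h h' + C) ∧
      ∀ h : FreeGroup Gen,
        iota (psi h) =
          PresentedGroup.of (rels := gRels) GGen.t * iota h *
            (PresentedGroup.of (rels := gRels) GGen.t)⁻¹ := by
  constructor
  · rintro ⟨L, C, hL, hC, H⟩
    obtain ⟨k, hk⟩ := exists_nat_gt (L + C)
    have h := H 1 (FreeGroup.of Gen.a ^ (k + 1))
    have hp : psi (FreeGroup.of Gen.a ^ (k + 1)) = FreeGroup.of Gen.b ^ (k + 1) := by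
      simp [psi]
    rw [map_one, hp] at h
    have h1 := dist_a k
    have h2 := dist_b (k + 1)
    push_cast at h2
    nlinarith
  · intro h
    have key : iota.comp psi =
        (MulAut.conj (PresentedGroup.of (rels := gRels) GGen.t)).toMonoidHom.comp iota := by
      apply FreeGroup.ext_hom
      rintro (_ | _)
      · simpa [iota, psi] using rel_a.symm
      · have e : (PresentedGroup.of (rels := gRels) GGen.t)⁻¹ = PresentedGroup.of GGen.t :=
          inv_eq_of_mul_eq_one_left rel_t
        have r := rel_a
        have : PresentedGroup.of (rels := gRels) GGen.a = PresentedGroup.of GGen.t *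
            PresentedGroup.of GGen.b * (PresentedGroup.of GGen.t)⁻¹ := by
          rw [← r, e]
          simp only [mul_assoc, rel_t, mul_one]
          rw [← mul_assoc, rel_t, one_mul]
        simpa [iota, psi] using this
    simpa using DFunLike.congr_fun key h
end
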